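/- arXiv:1402.2371 — 2 statements merged into one kernel-verified Lean document; each statement's English description precedes it below -/
import Mathlib

section
/- Let d ≥ 1 and consider binary forms of degree d over ℂ. The maximum Waring rank is r_max = d and the generic Waring rank is r_gen = ⌈(d+1)/2⌉; consequently r_max = 2·r_gen − 2 if d is even and r_max = 2·r_gen − 1 if d is odd. -/
open MvPolynomial

/-- The zero locus in affine space `σ → F` of a set `I` of polynomials. -/
def zLocus {F : Type*} [CommSemiring F] {σ : Type*} (I : Set (MvPolynomial σ F)) :
    Set (σ → F) :=
  {x | ∀ p ∈ I, eval x p = 0}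

/-- A subset of affine space is Zariski closed if it is the zero locus of a set of
polynomials. -/
def IsZClosed {F : Type*} [CommSemiring F] {σ : Type*} (S : Set (σ → F)) : Prop :=
  ∃ I : Set (MvPolynomial σ F), S = zLocus I

/-- Zariski open subsets of affine space. -/
def IsZOpen {F : Type*} [CommSemiring F] {σ : Type*} (S : Set (σ → F)) : Prop :=
  IsZClosed Sᶜ

/-- Zariski dense subsets of affine space. -/
def IsZDense {F : Type*} [CommSemiring F] {σ : Type*} (S : Set (σ → F)) : Prop :=
  ∀ C : Set (σ → F), IsZClosed C → S ⊆ C → C = Set.univ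

/-- Irreducibility with respect to the Zariski topology. -/
def IsZIrreducible {F : Type*} [CommSemiring F] {σ : Type*} (S : Set (σ → F)) : Prop :=
  S.Nonempty ∧ ∀ C₁ C₂ : Set (σ → F), IsZClosed C₁ → IsZClosed C₂ →
    S ⊆ C₁ ∪ C₂ → (S ⊆ C₁ ∨ S ⊆ C₂)

/-- An affine cone: a subset closed under scalar multiplication. -/
def IsCone {F : Type*} [CommSemiring F] {σ : Type*} (S : Set (σ → F)) : Prop :=
  ∀ (c : F), ∀ x ∈ S, c • x ∈ S

/-- The set of vectors expressible as a sum of exactly `r` elements of `S`. -/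
def sumsOf {F : Type*} [CommSemiring F] {σ : Type*} (S : Set (σ → F)) (r : ℕ) :
    Set (σ → F) :=
  {v | ∃ f : Fin r → (σ → F), (∀ i, f i ∈ S) ∧ ∑ i, f i = v}

/-- The `X`-rank of a vector with respect to the affine cone `S`: the least number of
elements of `S` summing to it (`⊤` if there is no such decomposition). -/
noncomputable def xRank {F : Type*} [CommSemiring F] {σ : Type*} (S : Set (σ → F))
    (v : σ → F) : ℕ∞ :=
  sInf {r : ℕ∞ | ∃ s : ℕ, r = s ∧ v ∈ sumsOf S s}

/-- The Zariski closure of a subset of affine space. -/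
def zClosure {F : Type*} [CommSemiring F] {σ : Type*} (S : Set (σ → F)) : Set (σ → F) :=
  ⋂₀ {C : Set (σ → F) | IsZClosed C ∧ S ⊆ C}

/-- The (affine cone over the) `r`-th secant variety: the Zariski closure of the set of
points of `X`-rank at most `r`. -/
noncomputable def secantCone {F : Type*} [CommSemiring F] {σ : Type*}
    (Xhat : Set (σ → F)) (r : ℕ) : Set (σ → F) :=
  zClosure {v | xRank Xhat v ≤ (r : ℕ∞)}

/-- The Waring rank of a (homogeneous degree-`d`) polynomial `f` in `n` variables:
the least `r` such that `f` is a linear combination of `r` d-th powers of linear forms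
(`⊤` if no such expression exists). -/
noncomputable def waringRank (F : Type*) [CommSemiring F] {n : ℕ} (d : ℕ)
    (f : MvPolynomial (Fin n) F) : ℕ∞ :=
  sInf {r : ℕ∞ | ∃ s : ℕ, r = s ∧ ∃ (c : Fin s → F) (l : Fin s → Fin n → F),
    f = ∑ i, C (c i) * (∑ j, C (l i j) * X j) ^ d}

/-- The binary form of degree `d` with coefficient vector `a`. -/
noncomputable def binaryForm (d : ℕ) (a : Fin (d + 1) → ℂ) : MvPolynomial (Fin 2) ℂ :=
  ∑ i : Fin (d + 1), C (a i) * X 0 ^ (i : ℕ) * X 1 ^ (d - (i : ℕ))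

/-!
The binomially normalized coefficients of a binary form are the moments `b n` of the functional
`Xⁿ ↦ b n` on univariate polynomials, and powers of linear forms correspond to evaluations. By
Sylvester's theorem, a form that is apolar to a separable polynomial of degree `s` is a sum of `s`
powers.

For the maximum rank, choose `z` such that `(X - z)ᵈ` has moment zero. If some `G` of degree less
than `d` has moment zero and `G z ≠ 0`, then a member of the pencil `G + t (X - z)ᵈ` is separable of
degree `d`; otherwise the functional is a multiple of the evaluation at `z`. The form
`x ^ (d - 1) * y` has rank `d`, because its functional reads off the top coefficient of polynomials
of degree less than `d`.

For the generic rank, let `m = ⌈(d + 1) / 2⌉`. The `m × m` catalecticant determinant bounds the rank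
from below, and the maximal minors of the `m × (m + 1)` catalecticant are the coefficients of an
apolar polynomial of degree `m`. That the determinant and the discriminant of this polynomial do not
vanish is a Zariski open condition, which holds at the power sums of `m` distinct nodes.
-/

open scoped Polynomial

/-! ### Binary forms and power sums -/

section Forms

variable {R : Type*} [CommSemiring R] {d : ℕ}

/-- The binary form of degree `d` with coefficients `a` in an arbitrary commutative semiring;
over `ℂ` it is `binaryForm d a`. -/
noncomputable def formOfCoeffs (d : ℕ) (a : Fin (d + 1) → R) : MvPolynomial (Fin 2) R :=
  ∑ i : Fin (d + 1), C (a i) * X 0 ^ (i : ℕ) * X 1 ^ (d - (i : ℕ))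

/-- The binary form `∑ n ≤ d, choose d n * b n * x ^ n * y ^ (d - n)`, in which the powers of the
linear forms `α x + β y` have the moments `b n = α ^ n * β ^ (d - n)`. -/
noncomputable def momentForm (d : ℕ) (b : ℕ → R) : MvPolynomial (Fin 2) R :=
  formOfCoeffs d fun i => d.choose i * b i

/-- The moments `b 0, …, b d` are those of a linear combination of `s` points
`(α ^ n * β ^ (d - n))ₙ` of the rational normal curve of degree `d`. The values of `b` beyond `d`
play no role. -/
def HasPowerSum (d s : ℕ) (b : ℕ → R) : Prop :=
  ∃ c α β : Fin s → R, ∀ n ≤ d, b n = ∑ k, c k * α k ^ n * β k ^ (d - n)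

lemma coeff_formOfCoeffs (a : Fin (d + 1) → R) (e : Fin 2 →₀ ℕ) :
    coeff e (formOfCoeffs d a) = if h : e 0 + e 1 = d then a ⟨e 0, by omega⟩ else 0 := by
  have hterm (i : Fin (d + 1)) : coeff e (C (a i) * X 0 ^ (i : ℕ) * X 1 ^ (d - (i : ℕ))) =
      if e 0 = i ∧ e 1 = d - i then a i else 0 := by
    rw [X_pow_eq_monomial, X_pow_eq_monomial, C_mul_monomial, monomial_mul, coeff_monomial]
    simp [Finsupp.ext_iff, Fin.forall_fin_two, eq_comm]
  simp only [formOfCoeffs, coeff_sum, hterm]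
  split_ifs with h
  · rw [Finset.sum_eq_single ⟨e 0, by omega⟩]
    · exact if_pos ⟨rfl, by dsimp only; omega⟩
    · exact fun i _ hi => if_neg fun hei => hi (Fin.ext hei.1.symm)
    · simp
  · exact Finset.sum_eq_zero fun i _ => if_neg (by omega)

lemma formOfCoeffs_injective : Function.Injective (formOfCoeffs (R := R) d) := by
  intro a a' h
  ext i
  have hi := congrArg (coeff (Finsupp.single 0 (i : ℕ) + Finsupp.single 1 (d - i))) h
  simpa [coeff_formOfCoeffs, Nat.add_sub_cancel' (Nat.le_of_lt_succ i.2)] using hi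

lemma isHomogeneous_formOfCoeffs (a : Fin (d + 1) → R) : (formOfCoeffs d a).IsHomogeneous d := by
  refine IsHomogeneous.sum _ _ _ fun i _ => ?_
  have h := ((isHomogeneous_C (Fin 2) (a i)).mul (isHomogeneous_X_pow (0 : Fin 2) i)).mul
    (isHomogeneous_X_pow (R := R) (1 : Fin 2) (d - i))
  rwa [show 0 + (i : ℕ) + (d - i) = d by omega] at h

lemma exists_eq_formOfCoeffs {f : MvPolynomial (Fin 2) R} (hf : f.IsHomogeneous d) :
    ∃ a, f = formOfCoeffs d a := by
  refine ⟨fun i => coeff (Finsupp.single 0 (i : ℕ) + Finsupp.single 1 (d - (i : ℕ))) f, ?_⟩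
  ext e
  rw [coeff_formOfCoeffs]
  split_ifs with h
  · congr 1
    ext j
    fin_cases j
    · simp
    · simp [← h]
  · refine hf.coeff_eq_zero ?_
    rwa [Finsupp.degree_eq_sum, Fin.sum_univ_two]

lemma sum_linear_pow_eq_momentForm {s : ℕ} (c : Fin s → R) (l : Fin s → Fin 2 → R) :
    ∑ k, C (c k) * (∑ j, C (l k j) * X j) ^ d =
      momentForm d fun n => ∑ k, c k * l k 0 ^ n * l k 1 ^ (d - n) := by
  simp only [momentForm, formOfCoeffs, Fin.sum_univ_two, add_pow, map_mul, map_sum,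
    Finset.mul_sum, Finset.sum_mul, map_pow]
  rw [Finset.sum_comm, Finset.sum_range]
  refine Finset.sum_congr rfl fun i _ => Finset.sum_congr rfl fun k _ => ?_
  simp only [map_natCast, mul_pow]
  ring

lemma choose_cast_ne_zero {n : ℕ} (hd : (d.factorial : R) ≠ 0) (hn : n ≤ d) :
    (d.choose n : R) ≠ 0 := by
  rw [← Nat.choose_mul_factorial_mul_factorial hn, mul_assoc, Nat.cast_mul] at hd
  exact left_ne_zero_of_mul hd

end Forms

section WaringRank

variable {K : Type*} [Field K] {d : ℕ}

lemma momentForm_eq_iff (hd : (d.factorial : K) ≠ 0) {b b' : ℕ → K} :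
    momentForm d b = momentForm d b' ↔ ∀ n ≤ d, b n = b' n := by
  rw [momentForm, momentForm, formOfCoeffs_injective.eq_iff, funext_iff]
  refine ⟨fun h n hn => ?_, fun h i => by rw [h i (by omega)]⟩
  exact mul_left_cancel₀ (choose_cast_ne_zero hd hn) (h ⟨n, by omega⟩)

lemma exists_eq_sum_linear_pow_iff (hd : (d.factorial : K) ≠ 0) {s : ℕ} {b : ℕ → K} :
    (∃ (c : Fin s → K) (l : Fin s → Fin 2 → K),
      momentForm d b = ∑ k, C (c k) * (∑ j, C (l k j) * X j) ^ d) ↔ HasPowerSum d s b := by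
  simp only [sum_linear_pow_eq_momentForm, momentForm_eq_iff hd]
  constructor
  · rintro ⟨c, l, h⟩
    exact ⟨c, fun k => l k 0, fun k => l k 1, h⟩
  · rintro ⟨c, α, β, h⟩
    exact ⟨c, fun k => ![α k, β k], h⟩

lemma waringRank_momentForm_le (hd : (d.factorial : K) ≠ 0) {s : ℕ} {b : ℕ → K}
    (h : HasPowerSum d s b) : waringRank K d (momentForm d b) ≤ s :=
  sInf_le ⟨s, rfl, (exists_eq_sum_linear_pow_iff hd).2 h⟩

lemma le_waringRank_momentForm (hd : (d.factorial : K) ≠ 0) {r : ℕ} {b : ℕ → K}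
    (h : ∀ s, HasPowerSum d s b → r ≤ s) : (r : ℕ∞) ≤ waringRank K d (momentForm d b) := by
  refine le_sInf ?_
  rintro _ ⟨s, rfl, hs⟩
  exact_mod_cast h s ((exists_eq_sum_linear_pow_iff hd).1 hs)

end WaringRank

/-! ### Apolarity and Sylvester's theorem -/

section Moment

variable {R : Type*} [CommSemiring R] {d : ℕ}

/-- The linear functional `Xⁿ ↦ b n` on univariate polynomials, the dehomogenized apolarity pairing
with the form of moments `b`. -/
noncomputable def moment (b : ℕ → R) : R[X] →ₗ[R] R :=
  Polynomial.lsum fun n => b n • LinearMap.id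

@[simp]
lemma moment_X_pow (b : ℕ → R) (n : ℕ) : moment b (Polynomial.X ^ n) = b n := by
  simp [moment, ← Polynomial.monomial_one_right_eq_X_pow, Polynomial.sum_monomial_index]

lemma linearMap_apply_eq_of_degree_lt {M : Type*} [AddCommMonoid M] [Module R M]
    {f g : R[X] →ₗ[R] M} {N : ℕ} (h : ∀ n < N, f (Polynomial.X ^ n) = g (Polynomial.X ^ n))
    {P : R[X]} (hP : P.degree < N) : f P = g P := by
  classical
  rw [← Polynomial.mem_degreeLT, Polynomial.degreeLT_eq_span_X_pow] at hP
  exact LinearMap.eqOn_span (by simpa [Set.EqOn] using h) hP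

/-- The polynomial `G` is apolar to the moments `b 0, …, b d`: they satisfy the linear recurrence
whose characteristic polynomial is `G`. -/
def IsApolar (d : ℕ) (b : ℕ → R) (G : R[X]) : Prop :=
  ∀ P, G ∣ P → P.natDegree ≤ d → moment b P = 0

end Moment

section Sylvester

variable {K : Type*} [Field K] {d : ℕ}

lemma isApolar_of_moment_mul_X_pow_eq_zero {b : ℕ → K} {G : K[X]}
    (h : ∀ i, G.natDegree + i ≤ d → moment b (G * Polynomial.X ^ i) = 0) : IsApolar d b G := by
  rintro _ ⟨Q, rfl⟩ hGQ
  rcases eq_or_ne (G * Q) 0 with h0 | h0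
  · rw [h0, map_zero]
  rw [Polynomial.natDegree_mul (left_ne_zero_of_mul h0) (right_ne_zero_of_mul h0)] at hGQ
  exact linearMap_apply_eq_of_degree_lt (f := moment b ∘ₗ LinearMap.mulLeft K G) (g := 0)
    (N := Q.natDegree + 1) (fun n hn => h n (by omega))
    (Polynomial.degree_le_natDegree.trans_lt (Nat.cast_lt.2 (Nat.lt_succ_self _)))

lemma exists_injective_eval_eq_zero {G : K[X]} (hsep : G.Separable) (hsplit : G.Splits) :
    ∃ α : Fin G.natDegree → K, Function.Injective α ∧ ∀ k, G.eval (α k) = 0 := by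
  classical
  have hcard : G.roots.toFinset.card = G.natDegree := by
    rw [Multiset.toFinset_card_of_nodup (Polynomial.nodup_roots hsep),
      hsplit.natDegree_eq_card_roots]
  let e := (G.roots.toFinset.equivFinOfCardEq hcard).symm
  refine ⟨fun k => e k, Subtype.val_injective.comp e.injective, fun k => ?_⟩
  exact Polynomial.isRoot_of_mem_roots (Multiset.mem_toFinset.1 (e k).2)

/-- Sylvester's theorem. Apolarity lets one replace `Xⁿ` by its remainder modulo `G`, which
Lagrange interpolation at the roots of `G` expresses through its values `αⁿ`. -/
theorem HasPowerSum.of_isApolar {b : ℕ → K} {G : K[X]} (hsep : G.Separable) (hsplit : G.Splits)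
    (hG : IsApolar d b G) : HasPowerSum d G.natDegree b := by
  obtain ⟨α, hα, hroot⟩ := exists_injective_eval_eq_zero hsep hsplit
  refine ⟨fun k => moment b (Lagrange.basis Finset.univ α k), α, 1, fun n hn => ?_⟩
  have hmod : moment b (Polynomial.X ^ n) = moment b (Polynomial.X ^ n % G) := by
    rw [← sub_eq_zero, ← map_sub]
    refine hG _ (Dvd.intro _ (eq_sub_of_add_eq' (EuclideanDomain.mod_add_div _ G))) ?_
    refine (Polynomial.natDegree_sub_le_of_le (Polynomial.natDegree_X_pow_le n) ?_).trans
      ((max_self n).trans_le hn)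
    rw [Polynomial.mod_def]
    exact Polynomial.natDegree_modByMonic_le_left.trans (Polynomial.natDegree_X_pow_le n)
  have hinterp : Polynomial.X ^ n % G =
      ∑ k, Polynomial.C (α k ^ n) * Lagrange.basis Finset.univ α k := by
    rw [← Lagrange.interpolate_apply]
    refine Lagrange.eq_interpolate_of_eval_eq _ hα.injOn ?_ fun k _ => ?_
    · rw [Finset.card_univ, Fintype.card_fin, ← Polynomial.degree_eq_natDegree hsep.ne_zero]
      exact Polynomial.degree_mod_lt _ hsep.ne_zero
    · have := congrArg (Polynomial.eval (α k))
        (EuclideanDomain.mod_add_div (Polynomial.X ^ n) G)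
      simpa [hroot] using this
  rw [← moment_X_pow b, hmod, hinterp, map_sum]
  refine Finset.sum_congr rfl fun k _ => ?_
  rw [← Polynomial.smul_eq_C_mul, map_smul, smul_eq_mul, Pi.one_apply, one_pow, mul_one, mul_comm]

end Sylvester

/-! ### The maximum rank -/

section UpperBound

variable {K : Type*} [Field K] {d : ℕ}

lemma eq_mul_pow_of_forall_eval_eq_zero (hd : d ≠ 0) {b : ℕ → K} {z : K}
    (hz : moment b ((Polynomial.X - Polynomial.C z) ^ d) = 0)
    (h : ∀ G : K[X], G.natDegree < d → moment b G = 0 → G.eval z = 0) :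
    ∀ n ≤ d, b n = b 0 * z ^ n := by
  have hlt : ∀ n < d, b n = b 0 * z ^ n := by
    intro n hn
    have hG := h (b 0 • Polynomial.X ^ n - b n • Polynomial.X ^ 0)
      ((Polynomial.natDegree_sub_le_of_le
        ((Polynomial.natDegree_smul_le _ _).trans (Polynomial.natDegree_X_pow_le n))
        ((Polynomial.natDegree_smul_le _ _).trans (Polynomial.natDegree_X_pow_le 0))).trans_lt
          (by simpa using hn))
      (by simp only [map_sub, map_smul, moment_X_pow, smul_eq_mul]; ring)
    rw [← sub_eq_zero, ← neg_sub, neg_eq_zero]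
    simpa using hG
  intro n hn
  obtain hn | rfl := hn.lt_or_eq
  · exact hlt n hn
  have hdeg :
      (Polynomial.X ^ n - (Polynomial.X - Polynomial.C z) ^ n).degree < (n : WithBot ℕ) := by
    rw [← Polynomial.degree_X_pow (R := K) n]
    refine Polynomial.degree_sub_lt_left ?_ ((Polynomial.monic_X_pow n).ne_zero) ?_
    · simp
    · rw [Polynomial.leadingCoeff_X_pow, (Polynomial.monic_X_sub_C z).pow n]
  have heval := linearMap_apply_eq_of_degree_lt (f := moment b)
    (g := b 0 • Polynomial.leval z) (fun m hm => by simpa using hlt m hm) hdeg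
  simpa [hz, hd] using heval

variable [IsAlgClosed K]

/-- A multiple root `w` of `G + t (X - z)ᵈ` is a root of `(X - z) G' - d G`, which does not depend
on `t`, and `w` determines `t`. -/
lemma exists_separable_add_C_mul_X_sub_C_pow (hd : (d : K) ≠ 0) {G : K[X]} {z : K}
    (hz : G.eval z ≠ 0) :
    ∃ t ≠ 0, (G + Polynomial.C t * (Polynomial.X - Polynomial.C z) ^ d).Separable := by
  classical
  have hd0 : d ≠ 0 := fun h => hd (by rw [h, Nat.cast_zero])
  set R : K[X] := (Polynomial.X - Polynomial.C z) * G.derivative - Polynomial.C (d : K) * G with hR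
  have hR0 : R ≠ 0 := fun h => mul_ne_zero hd hz (by
    simpa [hR] using congrArg (Polynomial.eval z) h)
  obtain ⟨t, ht⟩ := Infinite.exists_notMem_finset
    (insert 0 (R.roots.toFinset.image fun w => -G.eval w / (w - z) ^ d))
  rw [Finset.mem_insert, not_or, Finset.mem_image, not_exists] at ht
  refine ⟨t, ht.1, Polynomial.isCoprime_iff_aeval_ne_zero_of_isAlgClosed K K _ _ |>.2 fun w => ?_⟩
  by_contra! hw
  have hGw : G.eval w + t * (w - z) ^ d = 0 := by simpa using hw.1
  have hGw' : G.derivative.eval w + t * (d * (w - z) ^ (d - 1)) = 0 := by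
    simpa [Polynomial.derivative_X_sub_C_pow] using hw.2
  have hwz : w - z ≠ 0 := by
    intro h
    rw [h, zero_pow hd0, mul_zero, add_zero, sub_eq_zero.1 h] at hGw
    exact hz hGw
  have hRw : R.eval w = 0 := by
    have hpow : (w - z) ^ d = (w - z) ^ (d - 1) * (w - z) := (pow_sub_one_mul hd0 _).symm
    simp only [hR, Polynomial.eval_sub, Polynomial.eval_mul, Polynomial.eval_X, Polynomial.eval_C]
    linear_combination (w - z) * hGw' - d * hGw + t * d * hpow
  refine ht.2 w ⟨Multiset.mem_toFinset.2 ((Polynomial.mem_roots hR0).2 hRw), ?_⟩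
  rw [div_eq_iff (pow_ne_zero d hwz)]
  linear_combination -hGw

lemma exists_moment_X_sub_C_pow_eq_zero (hd : (d.factorial : K) ≠ 0) {b : ℕ → K} {j : ℕ}
    (hj : j < d) (hb : b j ≠ 0) :
    ∃ z, moment b ((Polynomial.X - Polynomial.C z) ^ d) = 0 := by
  set Q : K[X] :=
    ∑ k ∈ Finset.range (d + 1), Polynomial.monomial k (d.choose k * b (d - k)) with hQ
  have hcoeff : Q.coeff (d - j) ≠ 0 := by
    have hchoose : (d.choose (d - j) : K) ≠ 0 := choose_cast_ne_zero hd (d.sub_le j)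
    simpa [hQ, Polynomial.finsetSum_coeff, Polynomial.coeff_monomial, Nat.sub_sub_self hj.le, hb,
      Nat.lt_succ_of_le (d.sub_le j)] using hchoose
  have hdeg : Q.degree ≠ 0 := fun h => hcoeff <| Polynomial.coeff_eq_zero_of_degree_lt <| by
    rw [h]
    exact Nat.cast_pos.2 (Nat.sub_pos_of_lt hj)
  obtain ⟨z, hz⟩ := IsAlgClosed.exists_root Q hdeg
  refine ⟨-z, ?_⟩
  have hmoment : moment b ((Polynomial.C z + Polynomial.X) ^ d) = Q.eval z := by
    rw [add_pow, map_sum, hQ, Polynomial.eval_finsetSum]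
    refine Finset.sum_congr rfl fun k _ => ?_
    have hterm : Polynomial.C z ^ k * Polynomial.X ^ (d - k) * (d.choose k : K[X]) =
        (z ^ k * d.choose k) • Polynomial.X ^ (d - k) := by
      rw [Polynomial.smul_eq_C_mul, Polynomial.C_mul, Polynomial.C_pow, map_natCast]
      ring
    rw [hterm, map_smul, moment_X_pow, smul_eq_mul, Polynomial.eval_monomial]
    ring
  rw [Polynomial.C_neg, sub_neg_eq_add, add_comm, hmoment]
  exact hz

lemma HasPowerSum.of_moment_eq_zero (hd : (d : K) ≠ 0) {b : ℕ → K} {z : K}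
    (hz : moment b ((Polynomial.X - Polynomial.C z) ^ d) = 0) {G : K[X]} (hdeg : G.natDegree < d)
    (hG : moment b G = 0) (hGz : G.eval z ≠ 0) : HasPowerSum d d b := by
  obtain ⟨t, ht, hsep⟩ := exists_separable_add_C_mul_X_sub_C_pow hd hGz
  set H : K[X] := G + Polynomial.C t * (Polynomial.X - Polynomial.C z) ^ d with hH
  have hHdeg : H.natDegree = d := by
    have hpow : (Polynomial.C t * (Polynomial.X - Polynomial.C z) ^ d).natDegree = d := by
      rw [Polynomial.natDegree_C_mul ht, Polynomial.natDegree_pow, Polynomial.natDegree_X_sub_C,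
        mul_one]
    rw [hH, Polynomial.natDegree_add_eq_right_of_natDegree_lt (by rwa [hpow]), hpow]
  have hHb : moment b H = 0 := by
    rw [hH, map_add, hG, ← Polynomial.smul_eq_C_mul, map_smul, hz, smul_zero, add_zero]
  rw [← hHdeg]
  refine HasPowerSum.of_isApolar hsep (IsAlgClosed.splits H)
    (isApolar_of_moment_mul_X_pow_eq_zero fun i hi => ?_)
  rw [hHdeg] at hi
  rw [show i = 0 by omega, pow_zero, mul_one, hHb]

theorem exists_hasPowerSum_le (hd : (d.factorial : K) ≠ 0) (hd0 : d ≠ 0) (b : ℕ → K) :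
    ∃ s ≤ d, HasPowerSum d s b := by
  by_cases hb : ∃ j < d, b j ≠ 0
  · obtain ⟨j, hj, hbj⟩ := hb
    obtain ⟨z, hz⟩ := exists_moment_X_sub_C_pow_eq_zero hd hj hbj
    by_cases! hG : ∃ G : K[X], G.natDegree < d ∧ moment b G = 0 ∧ G.eval z ≠ 0
    · obtain ⟨G, hdeg, hG, hGz⟩ := hG
      have hdK : (d : K) ≠ 0 := by
        simpa using choose_cast_ne_zero hd (Nat.one_le_iff_ne_zero.2 hd0)
      exact ⟨d, le_rfl, .of_moment_eq_zero hdK hz hdeg hG hGz⟩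
    · refine ⟨1, Nat.one_le_iff_ne_zero.2 hd0, fun _ => b 0, fun _ => z, 1, fun n hn => ?_⟩
      simpa using eq_mul_pow_of_forall_eval_eq_zero hd0 hz hG n hn
  · push Not at hb
    refine ⟨1, Nat.one_le_iff_ne_zero.2 hd0, fun _ => b d, 1, 0, fun n hn => ?_⟩
    obtain hn | rfl := hn.lt_or_eq
    · simp [hb n hn, Nat.sub_ne_zero_of_lt hn]
    · simp

end UpperBound

section LowerBound

variable {K : Type*} [Field K] {d s : ℕ} {b : ℕ → K}

lemma HasPowerSum.exists_eq_sum_mul_pow (h : HasPowerSum (d + 1) s b) :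
    ∃ e γ : Fin s → K, ∀ n ≤ d, b n = ∑ k, e k * γ k ^ n := by
  obtain ⟨c, α, β, h⟩ := h
  -- A point with `β = 0` contributes only to `b (d + 1)`, so its slope `α / 0` is irrelevant.
  refine ⟨fun k => c k * β k ^ (d + 1), fun k => α k / β k, fun n hn => ?_⟩
  rw [h n (hn.trans d.le_succ)]
  refine Finset.sum_congr rfl fun k _ => ?_
  rcases eq_or_ne (β k) 0 with hβ | hβ
  · simp [hβ, Nat.sub_ne_zero_of_lt (Nat.lt_succ_of_le hn)]
  · rw [div_pow, pow_sub₀ _ hβ (hn.trans d.le_succ)]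
    field_simp

/-- A monic polynomial of degree `d` vanishing at `s ≤ d` nodes would have moment `0`, but its
moment is `b d`. -/
theorem HasPowerSum.succ_le (h : HasPowerSum (d + 1) s b) (hlt : ∀ n < d, b n = 0)
    (hd : b d ≠ 0) : d + 1 ≤ s := by
  by_contra! hs
  obtain ⟨e, γ, h⟩ := h.exists_eq_sum_mul_pow
  set G : K[X] := Lagrange.nodal Finset.univ γ * Polynomial.X ^ (d - s) with hG
  have hmonic : G.Monic := (Lagrange.nodal_monic).mul (Polynomial.monic_X_pow _)
  have hdeg : G.natDegree = d := by
    rw [hG, Lagrange.nodal_monic.natDegree_mul (Polynomial.monic_X_pow _), Lagrange.natDegree_nodal,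
      Polynomial.natDegree_X_pow, Finset.card_univ, Fintype.card_fin]
    omega
  have hlt' : G.degree < (d + 1 : ℕ) :=
    Polynomial.degree_le_natDegree.trans_lt (Nat.cast_lt.2 (by omega))
  have hcoeff : moment b G = b d * G.coeff d := by
    refine linearMap_apply_eq_of_degree_lt (g := b d • Polynomial.lcoeff K d) (fun n hn => ?_) hlt'
    obtain hn | rfl := (Nat.le_of_lt_succ hn).lt_or_eq
    · simp [Polynomial.coeff_X_pow, hlt n hn, hn.ne']
    · simp
  have hnodes : moment b G = ∑ k, e k * G.eval (γ k) := by
    have := linearMap_apply_eq_of_degree_lt (f := moment b) (g := ∑ k, e k • Polynomial.leval (γ k))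
      (fun n hn => by simpa using h n (Nat.le_of_lt_succ hn)) hlt'
    simpa using this
  refine hd ?_
  calc b d = b d * G.coeff d := by
        rw [← hdeg, hmonic.coeff_natDegree, hdeg, mul_one]
    _ = ∑ k, e k * G.eval (γ k) := hcoeff.symm.trans hnodes
    _ = 0 := Finset.sum_eq_zero fun k _ => by
        rw [hG, Polynomial.eval_mul, Lagrange.eval_nodal_at_node (Finset.mem_univ k), zero_mul,
          mul_zero]

end LowerBound

/-! ### The generic rank -/

section Catalecticant

variable {R S : Type*} [CommRing R] [CommRing S] {m : ℕ}

/-- The `m × m` catalecticant (Hankel) matrix of the moments `b`. -/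
def hankel (m : ℕ) (b : ℕ → R) : Matrix (Fin m) (Fin m) R :=
  Matrix.of fun i j => b (i + j)

/-- The apolar polynomial whose coefficients are the signed maximal minors of the `m × (m + 1)`
catalecticant `(b (i + j))`, which makes them polynomial in the moments. -/
noncomputable def apolarPoly (m : ℕ) (b : ℕ → R) : R[X] :=
  ∑ j : Fin (m + 1), Polynomial.monomial j
    ((-1) ^ (j : ℕ) * (Matrix.of fun i k : Fin m => b (i + j.succAbove k)).det)

/-- The product of the Hankel determinant and the discriminant of the apolar polynomial (formal
degrees make the latter commute with specialization). Where it is nonzero, Sylvester's theorem gives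
a decomposition into `m` powers and the Hankel matrix excludes shorter ones. -/
noncomputable def genericityInvariant (m : ℕ) (b : ℕ → R) : R :=
  (hankel m b).det *
    Polynomial.resultant (apolarPoly m b) (apolarPoly m b).derivative m (m - 1)

lemma map_det_of {n : ℕ} (φ : R →+* S) (A : Fin n → Fin n → R) :
    φ (Matrix.of A).det = (Matrix.of fun i j => φ (A i j)).det :=
  φ.map_det _

lemma apolarPoly_map (φ : R →+* S) (m : ℕ) (b : ℕ → R) :
    (apolarPoly m b).map φ = apolarPoly m fun n => φ (b n) := by
  simp [apolarPoly, Polynomial.map_sum, map_det_of]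

lemma map_genericityInvariant (φ : R →+* S) (m : ℕ) (b : ℕ → R) :
    φ (genericityInvariant m b) = genericityInvariant m fun n => φ (b n) := by
  rw [genericityInvariant, map_mul, ← Polynomial.resultant_map_map, ← Polynomial.derivative_map,
    apolarPoly_map, hankel, map_det_of]
  rfl

lemma coeff_apolarPoly (b : ℕ → R) : (apolarPoly m b).coeff m = (-1) ^ m * (hankel m b).det := by
  rw [apolarPoly, Polynomial.finsetSum_coeff, Finset.sum_eq_single (Fin.last m)]
  · simp [hankel]
  · intro j _ hj
    exact Polynomial.coeff_monomial_of_ne _ fun h => hj (Fin.ext h.symm)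
  · simp

lemma natDegree_apolarPoly_le (m : ℕ) (b : ℕ → R) : (apolarPoly m b).natDegree ≤ m :=
  Polynomial.natDegree_sum_le_of_forall_le _ _ fun j _ =>
    (Polynomial.natDegree_monomial_le _).trans (Nat.le_of_lt_succ j.2)

lemma coeff_apolarPoly_ne_zero {b : ℕ → R} (h : (hankel m b).det ≠ 0) :
    (apolarPoly m b).coeff m ≠ 0 := by
  rwa [coeff_apolarPoly, Ne, (isUnit_one.neg.pow m).mul_right_eq_zero]

lemma natDegree_apolarPoly {b : ℕ → R} (h : (hankel m b).det ≠ 0) :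
    (apolarPoly m b).natDegree = m :=
  Polynomial.natDegree_eq_of_le_of_coeff_ne_zero (natDegree_apolarPoly_le m b)
    (coeff_apolarPoly_ne_zero h)

lemma apolarPoly_ne_zero {b : ℕ → R} (h : (hankel m b).det ≠ 0) : apolarPoly m b ≠ 0 :=
  fun h0 => coeff_apolarPoly_ne_zero h (by rw [h0, Polynomial.coeff_zero])

/-- The moment is the Laplace expansion of a determinant with a repeated row. -/
lemma moment_apolarPoly_mul_X_pow (b : ℕ → R) {i : ℕ} (hi : i < m) :
    moment b (apolarPoly m b * Polynomial.X ^ i) = 0 := by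
  let A : Matrix (Fin (m + 1)) (Fin (m + 1)) R :=
    Matrix.of (Fin.cons (fun j => b (i + j)) fun k j => b (k + j))
  have hAdet : A.det = 0 :=
    Matrix.det_zero_of_row_eq (i := 0) (j := Fin.succ ⟨i, hi⟩) (Fin.succ_ne_zero _).symm rfl
  rw [← hAdet, Matrix.det_succ_row_zero, apolarPoly, Finset.sum_mul, map_sum]
  refine Finset.sum_congr rfl fun j _ => ?_
  rw [Polynomial.monomial_mul_X_pow, ← Polynomial.smul_X_eq_monomial, map_smul, moment_X_pow,
    smul_eq_mul, mul_right_comm, add_comm (j : ℕ)]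
  rfl

end Catalecticant

section Field

variable {K : Type*} [Field K] {d m s : ℕ} {b : ℕ → K}

/-- A decomposition into `s` powers factors the Hankel matrix through an `s`-dimensional space. -/
theorem HasPowerSum.le_of_det_hankel_ne_zero (h : HasPowerSum d s b) (hm : 2 * m ≤ d + 2)
    (hdet : (hankel m b).det ≠ 0) : m ≤ s := by
  obtain ⟨c, α, β, h⟩ := h
  have hfac : hankel m b =
      (Matrix.of fun (i : Fin m) (k : Fin s) => c k * α k ^ (i : ℕ) * β k ^ (m - 1 - (i : ℕ))) *
      (Matrix.of fun (k : Fin s) (j : Fin m) =>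
        α k ^ (j : ℕ) * β k ^ (d - (m - 1) - (j : ℕ))) := by
    ext i j
    rw [Matrix.mul_apply, hankel, Matrix.of_apply, h _ (by omega)]
    refine Finset.sum_congr rfl fun k _ => ?_
    rw [Matrix.of_apply, Matrix.of_apply,
      show d - ((i : ℕ) + j) = (m - 1 - (i : ℕ)) + (d - (m - 1) - (j : ℕ)) by omega]
    ring
  calc m = (hankel m b).rank := by
        rw [Matrix.rank_of_isUnit _ ((Matrix.isUnit_iff_isUnit_det _).2 hdet.isUnit),
          Fintype.card_fin]
    _ ≤ _ := hfac ▸ Matrix.rank_mul_le_left _ _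
    _ ≤ s := Matrix.rank_le_width _

lemma resultant_ne_zero_iff_isCoprime {f g : K[X]} {n : ℕ} (hf : f ≠ 0) (hg : g.natDegree ≤ n) :
    Polynomial.resultant f g f.natDegree n ≠ 0 ↔ IsCoprime f g := by
  rw [← Nat.add_sub_cancel' hg, Polynomial.resultant_add_right_deg _ _ _ _ _ le_rfl,
    Polynomial.coeff_natDegree, mul_ne_zero_iff,
    and_iff_right (pow_ne_zero _ (Polynomial.leadingCoeff_ne_zero.2 hf)), Ne,
    Polynomial.resultant_eq_zero_iff]
  simp [hf]

lemma genericityInvariant_ne_zero_iff : genericityInvariant m b ≠ 0 ↔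
    (hankel m b).det ≠ 0 ∧ (apolarPoly m b).Separable := by
  rw [genericityInvariant, mul_ne_zero_iff]
  refine and_congr_right fun hdet => ?_
  have hdeg := natDegree_apolarPoly hdet
  rw [Polynomial.separable_def, ← resultant_ne_zero_iff_isCoprime (apolarPoly_ne_zero hdet)
    ((Polynomial.natDegree_derivative_le _).trans_eq (by rw [hdeg])), hdeg]

theorem HasPowerSum.of_genericityInvariant_ne_zero [IsAlgClosed K] (hd : d < 2 * m)
    (h : genericityInvariant m b ≠ 0) : HasPowerSum d m b := by
  obtain ⟨hdet, hsep⟩ := genericityInvariant_ne_zero_iff.1 h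
  have hdeg := natDegree_apolarPoly hdet
  have hG : HasPowerSum d (apolarPoly m b).natDegree b :=
    .of_isApolar hsep (IsAlgClosed.splits _) <| isApolar_of_moment_mul_X_pow_eq_zero fun i hi =>
      moment_apolarPoly_mul_X_pow b (by omega)
  rwa [hdeg] at hG

theorem waringRank_momentForm_of_genericityInvariant_ne_zero [IsAlgClosed K]
    (hd : (d.factorial : K) ≠ 0) (hm : 2 * m ≤ d + 2) (hdm : d < 2 * m)
    (h : genericityInvariant m b ≠ 0) : waringRank K d (momentForm d b) = m :=
  (waringRank_momentForm_le hd (.of_genericityInvariant_ne_zero hdm h)).antisymm <|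
    le_waringRank_momentForm hd fun _ hs =>
      hs.le_of_det_hankel_ne_zero hm (genericityInvariant_ne_zero_iff.1 h).1

end Field

section PowerSums

variable {K : Type*} [Field K] {m : ℕ} {v : Fin m → K}

lemma separable_of_injective_of_eval_eq_zero (hv : Function.Injective v) {G : K[X]} (hG : G ≠ 0)
    (hdeg : G.natDegree ≤ m) (hroot : ∀ k, G.eval (v k) = 0) : G.Separable := by
  have hdvd : ∏ k, (Polynomial.X - Polynomial.C (v k)) ∣ G :=
    Fintype.prod_dvd_of_coprime (Polynomial.pairwise_coprime_X_sub_C hv)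
      fun k => Polynomial.dvd_iff_isRoot.2 (hroot k)
  rw [Polynomial.eq_leadingCoeff_mul_of_monic_of_dvd_of_natDegree_le
    (Polynomial.monic_prod_X_sub_C v Finset.univ) hdvd (by simpa using hdeg)]
  exact (Polynomial.separable_prod_X_sub_C_iff.2 hv).unit_mul
    (Polynomial.isUnit_C.2 (Polynomial.leadingCoeff_ne_zero.2 hG).isUnit)

lemma moment_sum_pow (v : Fin m → K) (P : K[X]) :
    moment (fun n => ∑ k, v k ^ n) P = ∑ k, P.eval (v k) := by
  have h := linearMap_apply_eq_of_degree_lt (f := moment fun n => ∑ k, v k ^ n)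
    (g := ∑ k, Polynomial.leval (v k)) (N := P.natDegree + 1) (fun n _ => by simp)
    (P := P) (Polynomial.degree_le_natDegree.trans_lt (Nat.cast_lt.2 (Nat.lt_succ_self _)))
  simpa using h

lemma det_hankel_sum_pow_ne_zero (hv : Function.Injective v) :
    (hankel m fun n => ∑ k, v k ^ n).det ≠ 0 := by
  have hfac : hankel m (fun n => ∑ k, v k ^ n) =
      (Matrix.vandermonde v).transpose * Matrix.vandermonde v := by
    ext i j
    rw [Matrix.vandermonde_transpose_mul_vandermonde]
    rfl
  have hdet := Matrix.det_vandermonde_ne_zero_iff.2 hv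
  rw [hfac, Matrix.det_mul, Matrix.det_transpose]
  exact mul_ne_zero hdet hdet

lemma genericityInvariant_sum_pow_ne_zero (hv : Function.Injective v) :
    genericityInvariant m (fun n => ∑ k, v k ^ n) ≠ 0 := by
  have hdet := det_hankel_sum_pow_ne_zero hv
  refine genericityInvariant_ne_zero_iff.2 ⟨hdet, ?_⟩
  refine separable_of_injective_of_eval_eq_zero hv (apolarPoly_ne_zero hdet)
    (natDegree_apolarPoly_le m _) (congrFun ?_)
  refine Matrix.eq_zero_of_forall_pow_sum_mul_pow_eq_zero hv fun i => ?_
  simpa [moment_sum_pow] using moment_apolarPoly_mul_X_pow (fun n => ∑ k, v k ^ n) i.2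

end PowerSums

section Zariski

variable {R σ : Type*}

lemma isZOpen_setOf_eval_ne_zero [CommSemiring R] (p : MvPolynomial σ R) :
    IsZOpen {a | eval a p ≠ 0} :=
  ⟨{p}, by ext a; simp [zLocus]⟩

lemma isZDense_setOf_eval_ne_zero [CommRing R] [IsDomain R] [Infinite R] {p : MvPolynomial σ R}
    (hp : p ≠ 0) : IsZDense {a | eval a p ≠ 0} := by
  rintro _ ⟨I, rfl⟩ hsub
  refine Set.eq_univ_of_forall fun a q hq => ?_
  have hqp : q * p = 0 := by
    refine MvPolynomial.funext fun x => ?_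
    by_cases hx : eval x p = 0
    · rw [map_mul, hx, mul_zero, map_zero]
    · rw [map_mul, hsub hx q hq, zero_mul, map_zero]
  rw [(mul_eq_zero.1 hqp).resolve_right hp, map_zero]

end Zariski

section GenericForm

variable {K : Type*} [Field K] {d : ℕ}

/-- The moments of the generic binary form of degree `d`, as polynomials in its coefficients. They
are continued beyond `d` by the constants `w n`: for even `d` the moment of index `d + 1` enters
`apolarPoly (d / 2 + 1)`, and the continuation allows any sequence `w` as a specialization. -/
noncomputable def genericMoment (d : ℕ) (w : ℕ → K) (n : ℕ) : MvPolynomial (Fin (d + 1)) K :=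
  if h : n < d + 1 then C (d.choose n : K)⁻¹ * X ⟨n, h⟩ else C (w n)

lemma momentForm_eval_genericMoment (hd : (d.factorial : K) ≠ 0) (w : ℕ → K)
    (a : Fin (d + 1) → K) :
    momentForm d (fun n => eval a (genericMoment d w n)) = formOfCoeffs d a := by
  refine congrArg (formOfCoeffs d) (funext fun i => ?_)
  have hchoose := choose_cast_ne_zero hd (Nat.le_of_lt_succ i.2)
  simp only [genericMoment, dif_pos i.2, map_mul, eval_C, eval_X, mul_inv_cancel_left₀ hchoose]

lemma eval_choose_mul_genericMoment (hd : (d.factorial : K) ≠ 0) (w : ℕ → K) (n : ℕ) :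
    eval (fun i : Fin (d + 1) => d.choose i * w i) (genericMoment d w n) = w n := by
  unfold genericMoment
  split_ifs with hn
  · simp [choose_cast_ne_zero hd (Nat.le_of_lt_succ hn)]
  · exact eval_C _

lemma genericityInvariant_genericMoment_ne_zero (hd : (d.factorial : K) ≠ 0) {m : ℕ} {w : ℕ → K}
    (hw : genericityInvariant m w ≠ 0) : genericityInvariant m (genericMoment d w) ≠ 0 := by
  intro h
  refine hw ?_
  have heval := congrArg (eval fun i : Fin (d + 1) => d.choose i * w i) h
  simpa only [map_genericityInvariant, eval_choose_mul_genericMoment hd, map_zero] using heval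

variable [IsAlgClosed K]

theorem isGreatest_waringRank (hd : (d.factorial : K) ≠ 0) (hd0 : d ≠ 0) :
    IsGreatest {r : ℕ∞ | ∃ f : MvPolynomial (Fin 2) K, f ≠ 0 ∧ f.IsHomogeneous d ∧
      waringRank K d f = r} (d : ℕ∞) := by
  have hle (b : ℕ → K) : waringRank K d (momentForm d b) ≤ d := by
    obtain ⟨s, hs, h⟩ := exists_hasPowerSum_le hd hd0 b
    exact (waringRank_momentForm_le hd h).trans (by exact_mod_cast hs)
  constructor
  · obtain ⟨e, rfl⟩ := Nat.exists_eq_succ_of_ne_zero hd0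
    set b : ℕ → K := Pi.single e 1 with hb
    refine ⟨momentForm (e + 1) b, fun h0 => ?_, isHomogeneous_formOfCoeffs _, (hle b).antisymm ?_⟩
    · have hzero : momentForm (e + 1) (0 : ℕ → K) = 0 := by simp [momentForm, formOfCoeffs]
      have hbe := (momentForm_eq_iff hd).1 (h0.trans hzero.symm) e e.le_succ
      simp [hb] at hbe
    · exact le_waringRank_momentForm hd fun s hs =>
        hs.succ_le (fun n hn => Pi.single_eq_of_ne hn.ne 1) (by simp [hb])
  · rintro _ ⟨f, -, hf, rfl⟩
    obtain ⟨a, rfl⟩ := exists_eq_formOfCoeffs hf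
    rw [← momentForm_eval_genericMoment hd 0 a]
    exact hle _

theorem exists_isZOpen_isZDense_waringRank_eq (hd : (d.factorial : K) ≠ 0) :
    ∃ U : Set (Fin (d + 1) → K), IsZOpen U ∧ IsZDense U ∧
      ∀ a ∈ U, waringRank K d (formOfCoeffs d a) = (((d + 2) / 2 : ℕ) : ℕ∞) := by
  set m := (d + 2) / 2
  let v : Fin m → K := fun k => Infinite.natEmbedding K k
  have hv : Function.Injective v := (Infinite.natEmbedding K).injective.comp Fin.val_injective
  set p := genericityInvariant m (genericMoment d fun n => ∑ k, v k ^ n) with hp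
  refine ⟨{a | eval a p ≠ 0}, isZOpen_setOf_eval_ne_zero p, isZDense_setOf_eval_ne_zero
    (genericityInvariant_genericMoment_ne_zero hd (genericityInvariant_sum_pow_ne_zero hv)),
    fun a ha => ?_⟩
  replace ha : eval a p ≠ 0 := ha
  rw [hp, map_genericityInvariant] at ha
  rw [← momentForm_eval_genericMoment hd (fun n => ∑ k, v k ^ n) a]
  exact waringRank_momentForm_of_genericityInvariant_ne_zero hd (by omega) (by omega) ha

end GenericForm

theorem stmt_13_general {K : Type*} [Field K] [IsAlgClosed K] (d : ℕ) (hd : 1 ≤ d)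
    (hK : (d.factorial : K) ≠ 0) :
    IsGreatest {r : ℕ∞ | ∃ f : MvPolynomial (Fin 2) K, f ≠ 0 ∧ f.IsHomogeneous d ∧
        waringRank K d f = r} (d : ℕ∞) ∧
    (∃ U : Set (Fin (d + 1) → K), IsZOpen U ∧ IsZDense U ∧
      ∀ a ∈ U, waringRank K d (formOfCoeffs d a) = (((d + 2) / 2 : ℕ) : ℕ∞)) ∧
    (Even d → d = 2 * ((d + 2) / 2) - 2) ∧
    (Odd d → d = 2 * ((d + 2) / 2) - 1) := by
  refine ⟨isGreatest_waringRank hK (Nat.one_le_iff_ne_zero.1 hd),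
    exists_isZOpen_isZDense_waringRank_eq hK, ?_, ?_⟩
  · rintro ⟨k, rfl⟩
    omega
  · rintro ⟨k, rfl⟩
    omega

/-- For binary forms of degree `d` over `ℂ`, the maximum Waring rank
is `d` and the generic Waring rank is `⌈(d+1)/2⌉`; consequently
`r_max = 2r_gen - 2` for even `d` and `r_max = 2r_gen - 1` for odd `d`. -/
theorem stmt_13 (d : ℕ) (hd : 1 ≤ d) :
    IsGreatest {r : ℕ∞ | ∃ f : MvPolynomial (Fin 2) ℂ, f ≠ 0 ∧ f.IsHomogeneous d ∧
        waringRank ℂ d f = r} (d : ℕ∞) ∧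
    (∃ U : Set (Fin (d + 1) → ℂ), IsZOpen U ∧ IsZDense U ∧
      ∀ a ∈ U, waringRank ℂ d (binaryForm d a) = (((d + 2) / 2 : ℕ) : ℕ∞)) ∧
    (Even d → d = 2 * ((d + 2) / 2) - 2) ∧
    (Odd d → d = 2 * ((d + 2) / 2) - 1) :=
  stmt_13_general d hd (mod_cast d.factorial_ne_zero)
end

section
/- Let X ⊆ ℙⁿ(ℝ) be an irreducible nondegenerate real projective variety whose real points are Zariski dense, and let r₀ be the minimum typical rank with respect to X. Then the maximum complex X_ℂ-rank of vectors in ℂ^{n+1} with respect to the complexification X_ℂ is at most 2·r₀. -/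
/-!
Let `K` be an infinite field and `L` an algebraically closed extension of it. The sums of `r`
points of the cone over `L` form the image of a polynomial map defined over `K`, namely summation
on an `r`-fold product. If the sums of `r` points over `K` are Zariski dense, this map induces an
injection of coordinate rings, so by Chevalley's theorem there is a nonzero polynomial `a` such that
every `L`-point with `a ≠ 0` is a sum of `r` points of the cone. For any `v` the nonempty Zariski
open sets `{a ≠ 0}` and `v - {a ≠ 0}` meet, so `v` is a sum of `2r` points. A typical rank `r` over
`ℝ` satisfies the hypothesis because a nonempty Euclidean open set is Zariski dense.
-/

open MvPolynomial

/-- `r` is a typical rank with respect to the real cone `Xhat` if the set of vectors of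
`X`-rank exactly `r` contains a nonempty Euclidean-open subset of `ℝ^{n+1}`. -/
def IsTypicalRank {n : ℕ} (Xhat : Set (Fin (n + 1) → ℝ)) (r : ℕ) : Prop :=
  ∃ U : Set (Fin (n + 1) → ℝ), IsOpen U ∧ U.Nonempty ∧ ∀ v ∈ U, xRank Xhat v = (r : ℕ∞)

section Constructible

open Topology

lemma exists_isOpen_subset_or_subset_compl_of_isConstructible {X : Type*} [TopologicalSpace X]
    [IrreducibleSpace X] {s : Set X} (hs : IsConstructible s) :
    ∃ U : Set X, IsOpen U ∧ U.Nonempty ∧ (U ⊆ s ∨ U ⊆ sᶜ) := by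
  induction hs using IsConstructible.empty_union_induction with
  | open_retrocompact U hU _ =>
    rcases U.eq_empty_or_nonempty with rfl | hne
    · exact ⟨Set.univ, isOpen_univ, Set.univ_nonempty, .inr Set.compl_empty.ge⟩
    · exact ⟨U, hU, hne, .inl subset_rfl⟩
  | union s _ t _ ihs iht =>
    obtain ⟨U, hU, hUne, hUs | hUs⟩ := ihs
    · exact ⟨U, hU, hUne, .inl (hUs.trans Set.subset_union_left)⟩
    obtain ⟨V, hV, hVne, hVt | hVt⟩ := iht
    · exact ⟨V, hV, hVne, .inl (hVt.trans Set.subset_union_right)⟩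
    refine ⟨U ∩ V, hU.inter hV, nonempty_preirreducible_inter hU hV hUne hVne, .inr ?_⟩
    rw [Set.compl_union]
    exact Set.inter_subset_inter hUs hVt
  | compl s _ ih =>
    obtain ⟨U, hU, hUne, h⟩ := ih
    exact ⟨U, hU, hUne, by rwa [compl_compl, or_comm]⟩

lemma exists_isOpen_subset_of_isConstructible_of_dense {X : Type*} [TopologicalSpace X]
    [IrreducibleSpace X] {s : Set X} (hs : IsConstructible s) (hdense : Dense s) :
    ∃ U : Set X, IsOpen U ∧ U.Nonempty ∧ U ⊆ s := by
  obtain ⟨U, hU, hUne, hUs | hUs⟩ := exists_isOpen_subset_or_subset_compl_of_isConstructible hs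
  · exact ⟨U, hU, hUne, hUs⟩
  · obtain ⟨x, hxU, hxs⟩ := hdense.inter_open_nonempty U hU hUne
    exact absurd hxs (hUs hxU)

lemma exists_basicOpen_subset_range_comap {R A : Type*} [CommRing R] [IsDomain R] [CommRing A]
    {f : R →+* A} (hf : f.FinitePresentation) (hinj : Function.Injective f) :
    ∃ a : R, a ≠ 0 ∧
      (PrimeSpectrum.basicOpen a : Set (PrimeSpectrum R)) ⊆ Set.range (PrimeSpectrum.comap f) := by
  have hdense : DenseRange (PrimeSpectrum.comap f) := by
    rw [PrimeSpectrum.denseRange_comap_iff_ker_le_nilRadical,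
      (RingHom.injective_iff_ker_eq_bot f).mp hinj]
    exact bot_le
  obtain ⟨U, hU, ⟨p, hp⟩, hUf⟩ := exists_isOpen_subset_of_isConstructible_of_dense
    (PrimeSpectrum.isConstructible_range_comap hf) hdense
  obtain ⟨_, ⟨a, rfl⟩, hpa, haU⟩ :=
    PrimeSpectrum.isTopologicalBasis_basic_opens.exists_subset_of_mem_open hp hU
  exact ⟨a, fun ha => hpa (ha ▸ zero_mem _), haU.trans hUf⟩

end Constructible

section GeometricPoints

variable {Ω : Type*} [Field Ω] [IsAlgClosed Ω]

-- Zariski's lemma: the residue field at a maximal ideal of `A` is finite over `k`.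
lemma nonempty_algHom_of_finiteType {k A : Type*} [Field k] [Algebra k Ω] [CommRing A]
    [Nontrivial A] [Algebra k A] [Algebra.FiniteType k A] : Nonempty (A →ₐ[k] Ω) := by
  obtain ⟨m, hm⟩ := Ideal.exists_maximal A
  let : Field (A ⧸ m) := Ideal.Quotient.field m
  have : Module.Finite k (A ⧸ m) := finite_of_finite_type_of_isJacobsonRing k (A ⧸ m)
  exact ⟨(IsAlgClosed.lift : A ⧸ m →ₐ[k] Ω).comp (Ideal.Quotient.mkₐ k m)⟩

lemma exists_comp_eq_of_comap_bot_mem_range_comap {R A : Type*} [CommRing R] [CommRing A]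
    {f : R →+* A} (hf : f.FiniteType) (φ : R →+* Ω)
    (hφ : PrimeSpectrum.comap φ ⊥ ∈ Set.range (PrimeSpectrum.comap f)) :
    ∃ ψ : A →+* Ω, ψ.comp f = φ := by
  algebraize [f]
  let p : PrimeSpectrum R := PrimeSpectrum.comap φ ⊥
  have : Nontrivial (p.asIdeal.Fiber A) := p.nontrivial_iff_mem_rangeComap.mpr hφ
  let ι : p.asIdeal.ResidueField →+* Ω :=
    Ideal.ResidueField.lift p.asIdeal φ le_rfl fun x hx => isUnit_iff_ne_zero.mpr hx
  algebraize [ι]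
  obtain ⟨ψ⟩ := nonempty_algHom_of_finiteType (Ω := Ω) (k := p.asIdeal.ResidueField)
    (A := p.asIdeal.Fiber A)
  let includeFiber : A →ₐ[R] p.asIdeal.Fiber A := Algebra.TensorProduct.includeRight
  refine ⟨ψ.toRingHom.comp includeFiber.toRingHom, RingHom.ext fun x => ?_⟩
  calc ψ (includeFiber (algebraMap R A x))
      = ψ (algebraMap p.asIdeal.ResidueField _ (algebraMap R _ x)) := by
        rw [AlgHom.commutes, ← IsScalarTower.algebraMap_apply]
    _ = ι (algebraMap R _ x) := ψ.commutes _
    _ = φ x := Ideal.ResidueField.lift_algebraMap ..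

lemma exists_ne_zero_forall_exists_comp_eq {k R A : Type*} [CommRing k] [CommRing R] [IsDomain R]
    [CommRing A] [Algebra k R] [Algebra k A] [Algebra k Ω] {f : R →ₐ[k] A}
    (hf : f.FinitePresentation) (hinj : Function.Injective f) :
    ∃ a : R, a ≠ 0 ∧ ∀ φ : R →ₐ[k] Ω, φ a ≠ 0 → ∃ ψ : A →ₐ[k] Ω, ψ.comp f = φ := by
  obtain ⟨a, ha, hrange⟩ := exists_basicOpen_subset_range_comap hf hinj
  refine ⟨a, ha, fun φ hφ => ?_⟩
  obtain ⟨ψ, hψ⟩ := exists_comp_eq_of_comap_bot_mem_range_comap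
    (RingHom.FiniteType.of_finitePresentation hf) φ.toRingHom (hrange hφ)
  have hψf (x : R) : ψ (f x) = φ x := DFunLike.congr_fun hψ x
  have hψk (c : k) : ψ (algebraMap k A c) = algebraMap k Ω c := by
    rw [← f.commutes, hψf, φ.commutes]
  exact ⟨{ ψ with commutes' := hψk }, AlgHom.ext hψf⟩

end GeometricPoints

section ZariskiDensity

open scoped Topology

lemma eq_zero_of_isZDense {R σ : Type*} [CommRing R] [IsDomain R] [Infinite R]
    {S : Set (σ → R)} (hS : IsZDense S) {p : MvPolynomial σ R} (hp : ∀ x ∈ S, eval x p = 0) :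
    p = 0 := by
  have huniv : zLocus {p} = Set.univ :=
    hS _ ⟨_, rfl⟩ fun x hx q hq => Set.mem_singleton_iff.mp hq ▸ hp x hx
  refine MvPolynomial.funext fun x => ?_
  rw [map_zero]
  exact huniv.ge (Set.mem_univ x) p rfl

lemma isZDense_of_mem_nhds {R σ : Type*} [CommRing R] [IsDomain R] [TopologicalSpace R] [T1Space R]
    [∀ x : R, (𝓝[≠] x).NeBot] {S : Set (σ → R)} {x : σ → R} (hS : S ∈ 𝓝 x) : IsZDense S := by
  rintro _ ⟨I, rfl⟩ hSI
  rw [nhds_pi, Filter.mem_pi] at hS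
  obtain ⟨J, -, t, ht, hJt⟩ := hS
  have hbox : Set.univ.pi t ⊆ S := (Set.pi_mono' (fun _ _ => subset_rfl) J.subset_univ).trans hJt
  refine Set.eq_univ_of_forall fun y p hp => ?_
  have hp0 : p = 0 := funext_set t (fun i => infinite_of_mem_nhds (x i) (ht i)) fun z hz => by
    rw [hSI (hbox hz) p hp, map_zero]
  rw [hp0, map_zero]

lemma exists_eval_ne_zero_add_eq {R σ : Type*} [CommRing R] [IsDomain R] [Infinite R]
    {a b : MvPolynomial σ R} (ha : a ≠ 0) (hb : b ≠ 0) (v : σ → R) :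
    ∃ y z : σ → R, eval y a ≠ 0 ∧ eval z b ≠ 0 ∧ y + z = v := by
  let b' : MvPolynomial σ R := bind₁ (fun i => C (v i) - X i) b
  have eval_b' (y : σ → R) : eval y b' = eval (v - y) b := by
    simp only [b', ← coe_aeval_eq_eval, RingHom.coe_coe, aeval_bind₁, map_sub, aeval_X, aeval_C]
    rfl
  have hb' : b' ≠ 0 := by
    refine fun h => hb (MvPolynomial.funext fun z => ?_)
    rw [← sub_sub_cancel v z, ← eval_b', h, map_zero, map_zero]
  obtain ⟨y, hy⟩ : ∃ y, eval y (a * b') ≠ 0 := by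
    by_contra! h
    exact mul_ne_zero ha hb' (MvPolynomial.funext fun y => by rw [h, map_zero])
  rw [map_mul, eval_b'] at hy
  exact ⟨y, v - y, left_ne_zero_of_mul hy, right_ne_zero_of_mul hy, add_sub_cancel y v⟩

end ZariskiDensity

section PolynomialMaps

/-- The map on `A`-points of affine space whose coordinates are the polynomials `g` over `R`. -/
noncomputable def polyMap {R σ τ : Type*} [CommSemiring R] (A : Type*) [CommSemiring A]
    [Algebra R A] (g : σ → MvPolynomial τ R) (x : τ → A) : σ → A :=
  fun s => aeval x (g s)

lemma aeval_polyMap {R A σ τ : Type*} [CommSemiring R] [CommSemiring A] [Algebra R A]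
    (g : σ → MvPolynomial τ R) (x : τ → A) (p : MvPolynomial σ R) :
    aeval (polyMap A g x) p = aeval x (bind₁ g p) := by
  rw [aeval_bind₁]
  rfl

variable {K σ τ : Type*} [Field K] (L : Type*) [Field L] [Algebra K L]

lemma injective_mk_bind₁_of_isZDense [Infinite K] {g : σ → MvPolynomial τ K}
    {J : Ideal (MvPolynomial τ K)} (hdense : IsZDense (polyMap K g '' zeroLocus K J)) :
    Function.Injective ((Ideal.Quotient.mkₐ K J).comp (bind₁ g)) := by
  refine (injective_iff_map_eq_zero _).mpr fun p hp => eq_zero_of_isZDense hdense ?_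
  rintro _ ⟨x, hx, rfl⟩
  rw [← coe_aeval_eq_eval, RingHom.coe_coe, aeval_polyMap]
  exact hx _ (Ideal.Quotient.eq_zero_iff_mem.mp hp)

variable {L} in
lemma exists_mem_zeroLocus_aeval_eq {J : Ideal (MvPolynomial τ K)}
    (ψ : MvPolynomial τ K ⧸ J →ₐ[K] L) :
    ∃ x ∈ zeroLocus L J, aeval x = ψ.comp (Ideal.Quotient.mkₐ K J) := by
  have haeval : aeval (fun t => ψ (Ideal.Quotient.mk J (X t))) =
      ψ.comp (Ideal.Quotient.mkₐ K J) :=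
    MvPolynomial.algHom_ext fun t => aeval_X _ t
  refine ⟨_, fun p hp => ?_, haeval⟩
  rw [haeval, AlgHom.comp_apply, Ideal.Quotient.mkₐ_eq_mk, Ideal.Quotient.eq_zero_iff_mem.mpr hp,
    map_zero]

lemma exists_ne_zero_mem_image_polyMap [Infinite K] [IsAlgClosed L] [Finite σ] [Finite τ]
    {g : σ → MvPolynomial τ K} {J : Ideal (MvPolynomial τ K)}
    (hdense : IsZDense (polyMap K g '' zeroLocus K J)) :
    ∃ a : MvPolynomial σ K, a ≠ 0 ∧
      ∀ y : σ → L, aeval y a ≠ 0 → y ∈ polyMap L g '' zeroLocus L J := by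
  let f : MvPolynomial σ K →ₐ[K] MvPolynomial τ K ⧸ J := (Ideal.Quotient.mkₐ K J).comp (bind₁ g)
  have hf : f.FinitePresentation := by
    refine AlgHom.FinitePresentation.of_finiteType.mp
      (RingHom.FiniteType.of_comp_finiteType (f := algebraMap K (MvPolynomial σ K)) ?_)
    rw [AlgHom.toRingHom_eq_coe, f.comp_algebraMap, RingHom.finiteType_algebraMap]
    infer_instance
  obtain ⟨a, ha, hext⟩ :=
    exists_ne_zero_forall_exists_comp_eq (Ω := L) hf (injective_mk_bind₁_of_isZDense hdense)
  refine ⟨a, ha, fun y hy => ?_⟩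
  obtain ⟨ψ, hψ⟩ := hext (aeval y) hy
  obtain ⟨x, hx, hxψ⟩ := exists_mem_zeroLocus_aeval_eq ψ
  refine ⟨x, hx, _root_.funext fun s => ?_⟩
  calc aeval x (g s) = ψ (f (X s)) := by
        rw [hxψ, AlgHom.comp_apply, AlgHom.comp_apply, bind₁_X_right]
    _ = aeval y (X s) := DFunLike.congr_fun hψ (X s)
    _ = y s := aeval_X y s

end PolynomialMaps

section SumsOfPoints

lemma xRank_le_of_mem_sumsOf {F σ : Type*} [CommSemiring F] {S : Set (σ → F)} {v : σ → F} {r : ℕ}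
    (h : v ∈ sumsOf S r) : xRank S v ≤ r :=
  sInf_le ⟨r, rfl, h⟩

lemma mem_sumsOf_of_xRank_eq {F σ : Type*} [CommSemiring F] {S : Set (σ → F)} {v : σ → F} {r : ℕ}
    (h : xRank S v = r) : v ∈ sumsOf S r := by
  have hne : {r : ℕ∞ | ∃ s : ℕ, r = s ∧ v ∈ sumsOf S s}.Nonempty := by
    by_contra! hempty
    rw [xRank, hempty, sInf_empty] at h
    exact ENat.top_ne_natCast r h
  obtain ⟨s, hs, hv⟩ := csInf_mem hne
  obtain rfl : r = s := Nat.cast_injective (h.symm.trans hs)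
  exact hv

lemma add_mem_sumsOf {F σ : Type*} [CommSemiring F] {S : Set (σ → F)} {v w : σ → F} {r s : ℕ}
    (hv : v ∈ sumsOf S r) (hw : w ∈ sumsOf S s) : v + w ∈ sumsOf S (r + s) := by
  obtain ⟨f, hf, rfl⟩ := hv
  obtain ⟨g, hg, rfl⟩ := hw
  refine ⟨Fin.append f g, ?_, by simp only [Fin.sum_univ_add, Fin.append_left, Fin.append_right]⟩
  rw [Fin.forall_fin_add]
  simp only [Fin.append_left, Fin.append_right]
  exact ⟨hf, hg⟩

lemma IsTypicalRank.isZDense_sumsOf {n : ℕ} {S : Set (Fin (n + 1) → ℝ)} {r : ℕ}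
    (hr : IsTypicalRank S r) : IsZDense (sumsOf S r) := by
  obtain ⟨U, hU, ⟨u, hu⟩, hrank⟩ := hr
  exact isZDense_of_mem_nhds
    (Filter.mem_of_superset (hU.mem_nhds hu) fun v hv => mem_sumsOf_of_xRank_eq (hrank v hv))

variable {K σ : Type*} [Field K] (L : Type*) [Field L] [Algebra K L]

lemma zLocus_map_image_eq_zeroLocus (I : Set (MvPolynomial σ K)) :
    zLocus (MvPolynomial.map (algebraMap K L) '' I) = zeroLocus L (Ideal.span I) := by
  rw [zeroLocus_span]
  ext x
  simp only [zLocus, Set.mem_ofPred_eq, Set.forall_mem_image, eval_map, aeval_def]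

lemma zLocus_eq_zeroLocus (I : Set (MvPolynomial σ K)) :
    zLocus I = zeroLocus K (Ideal.span I) := by
  rw [zeroLocus_span]
  rfl

/-- The ideal cutting out the `r`-fold product of the zero locus of `J`, where the variable `(i, s)`
is the coordinate `s` of the `i`-th factor. -/
noncomputable def prodIdeal {R σ : Type*} [CommSemiring R] (J : Ideal (MvPolynomial σ R)) (r : ℕ) :
    Ideal (MvPolynomial (Fin r × σ) R) :=
  ⨆ i, J.map (rename (Prod.mk i))

/-- The coordinates of the summation map on an `r`-fold product of `σ`-dimensional affine
space. -/
noncomputable def sumCoords (R σ : Type*) [CommSemiring R] (r : ℕ) (s : σ) :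
    MvPolynomial (Fin r × σ) R :=
  ∑ i, X (i, s)

variable {L} in
lemma mem_zeroLocus_prodIdeal {J : Ideal (MvPolynomial σ K)} {r : ℕ} {x : Fin r × σ → L} :
    x ∈ zeroLocus L (prodIdeal J r) ↔ ∀ i, (fun s => x (i, s)) ∈ zeroLocus L J := by
  change prodIdeal J r ≤ RingHom.ker (aeval (R := K) x) ↔
    ∀ i, J ≤ RingHom.ker (aeval (R := K) fun s => x (i, s))
  simp only [prodIdeal, iSup_le_iff, Ideal.map_le_iff_le_comap]
  refine forall_congr' fun i => ?_
  have hker : (RingHom.ker (aeval (R := K) x)).comap (rename (Prod.mk i)) =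
      RingHom.ker (aeval (R := K) fun s => x (i, s)) := by
    ext p
    simp only [Ideal.mem_comap, RingHom.mem_ker, aeval_rename, Function.comp_def]
  rw [hker]

lemma sumsOf_zeroLocus (J : Ideal (MvPolynomial σ K)) (r : ℕ) :
    sumsOf (zeroLocus L J) r = polyMap L (sumCoords K σ r) '' zeroLocus L (prodIdeal J r) := by
  ext v
  constructor
  · rintro ⟨f, hf, rfl⟩
    refine ⟨fun is => f is.1 is.2, mem_zeroLocus_prodIdeal.mpr hf, ?_⟩
    ext s
    simp [polyMap, sumCoords]
  · rintro ⟨x, hx, rfl⟩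
    refine ⟨fun i s => x (i, s), mem_zeroLocus_prodIdeal.mp hx, ?_⟩
    ext s
    simp [polyMap, sumCoords]

end SumsOfPoints

theorem stmt_14_general {K L σ : Type*} [Field K] [Infinite K] [Field L] [IsAlgClosed L]
    [Algebra K L] [Finite σ] (I : Set (MvPolynomial σ K)) {r : ℕ}
    (hr : IsZDense (sumsOf (zLocus I) r)) (v : σ → L) :
    xRank (zLocus (MvPolynomial.map (algebraMap K L) '' I)) v ≤ 2 * (r : ℕ∞) := by
  rw [zLocus_eq_zeroLocus, sumsOf_zeroLocus] at hr
  rw [zLocus_map_image_eq_zeroLocus]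
  obtain ⟨a, ha, hsum⟩ := exists_ne_zero_mem_image_polyMap L hr
  rw [← sumsOf_zeroLocus] at hsum
  have ha' : MvPolynomial.map (algebraMap K L) a ≠ 0 :=
    (map_ne_zero_iff _ (map_injective _ (algebraMap K L).injective)).mpr ha
  obtain ⟨y, z, hy, hz, rfl⟩ := exists_eval_ne_zero_add_eq ha' ha' v
  rw [eval_map, ← aeval_def] at hy hz
  have hrank := xRank_le_of_mem_sumsOf (add_mem_sumsOf (hsum y hy) (hsum z hz))
  rwa [Nat.cast_add, ← two_mul] at hrank

/-- For a real irreducible nondegenerate projective variety with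
Zariski-dense real points, the maximum complex rank with respect to the
complexification is at most twice the minimum typical rank. -/
theorem stmt_14 {n : ℕ} (I : Set (MvPolynomial (Fin (n + 1)) ℝ))
    (XhatR : Set (Fin (n + 1) → ℝ)) (XhatC : Set (Fin (n + 1) → ℂ))
    (hXR : XhatR = zLocus I)
    (hXC : XhatC = zLocus (⇑(MvPolynomial.map (algebraMap ℝ ℂ)) '' I))
    (hcone : IsCone XhatR) (hirr : IsZIrreducible XhatR)
    (hnondeg : Submodule.span ℝ XhatR = ⊤)
    (hdense : ∀ C : Set (Fin (n + 1) → ℂ), IsZClosed C →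
      (fun x : Fin (n + 1) → ℝ => fun i => (x i : ℂ)) '' XhatR ⊆ C → XhatC ⊆ C)
    (r0 : ℕ) (hr0 : IsLeast {r : ℕ | IsTypicalRank XhatR r} r0)
    (rmaxC : ℕ∞)
    (hmaxC : IsGreatest
      {r : ℕ∞ | ∃ v : Fin (n + 1) → ℂ, v ≠ 0 ∧ xRank XhatC v = r} rmaxC) :
    rmaxC ≤ 2 * (r0 : ℕ∞) := by
  obtain ⟨v, -, rfl⟩ := hmaxC.1
  subst hXR hXC
  exact stmt_14_general I hr0.1.isZDense_sumsOf v
end
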